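/- Let D be a d×d doubly stochastic matrix which is the uniform average of m permutation matrices, i.e. D = (1/m)·(P_1 + ⋯ + P_m) for permutation matrices P_1, …, P_m. Then there exists an (m·d)×(m·d) unitary complex matrix U such that for every vector β ∈ ℂᵈ, the diagonal compression of U·(I_m ⊗ diag(β))·Uᴴ equals I_m ⊗ diag(Dβ), where Dβ denotes the product of D (viewed as a complex matrix) with β. -/

import Mathlib

/-!
The unitary is `U = (F ⊗ I) · (P₁ ⊕ ⋯ ⊕ Pₘ)`, where `F` is the normalised `m × m` Fourier matrix.
It is a product of unitaries, and its `(j, a), (k, b)` entry has squared modulus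
`|F j k|² (P_k)_{ab} = (P_k)_{ab} / m`, since every entry of `F` has modulus `1 / √m`. The `(j, a)`
diagonal entry of `U (I ⊗ diag β) Uᴴ` is the sum of the `β b` weighted by these squared moduli,
that is `∑ k, β (σ k a) / m = (D β) a`.
-/

open Matrix
open scoped Kronecker

/-- The diagonal compression of a square complex matrix: it keeps the diagonal
entries and sets all off-diagonal entries to zero. -/
def diagCompress {n : Type*} [DecidableEq n] (M : Matrix n n ℂ) : Matrix n n ℂ :=
  Matrix.diagonal (Matrix.diag M)

/-- A unitary matrix all of whose entries have modulus `1 / √m` exists: the normalised Fourier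
matrix `ζ ^ (j k) / √m`, with `ζ` a primitive `m`-th root of unity. -/
lemma exists_flat_unitary (m : ℕ) (hm : 0 < m) :
    ∃ F : Matrix (Fin m) (Fin m) ℂ, F * Fᴴ = 1 ∧ ∀ j k, F j k * star (F j k) = 1 / m := by
  have hm0 : (m : ℂ) ≠ 0 := by exact_mod_cast hm.ne'
  obtain ⟨ζ, hζ⟩ : ∃ ζ : ℂ, IsPrimitiveRoot ζ m := ⟨_, Complex.isPrimitiveRoot_exp m hm.ne'⟩
  have hζ1 : ζ * star ζ = 1 := by
    have h := Complex.norm_eq_one_of_pow_eq_one hζ.pow_eq_one hm.ne'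
    rw [Complex.star_def, Complex.mul_conj, Complex.normSq_eq_norm_sq, h]
    simp
  obtain ⟨c, hc⟩ : ∃ c : ℂ, c * star c = 1 / m := by
    refine ⟨((Real.sqrt (1 / m) : ℝ) : ℂ), ?_⟩
    rw [Complex.star_def, Complex.conj_ofReal, ← Complex.ofReal_mul,
      Real.mul_self_sqrt (by positivity)]
    push_cast
    rfl
  refine ⟨Matrix.of fun j k => c * (ζ ^ (j : ℕ)) ^ (k : ℕ), ?_, ?_⟩
  · ext j l
    have hterm : ∀ k : Fin m,
        c * (ζ ^ (j : ℕ)) ^ (k : ℕ) * star (c * (ζ ^ (l : ℕ)) ^ (k : ℕ))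
          = 1 / m * (ζ ^ (j : ℕ) * star ζ ^ (l : ℕ)) ^ (k : ℕ) := by
      intro k
      rw [← hc, star_mul', star_pow, star_pow, mul_pow]
      ring
    simp only [Matrix.mul_apply, Matrix.conjTranspose_apply, Matrix.of_apply, hterm]
    rw [← Finset.mul_sum,
      Fin.sum_univ_eq_sum_range (fun k => (ζ ^ (j : ℕ) * star ζ ^ (l : ℕ)) ^ k) m]
    by_cases hjl : j = l
    · subst hjl
      rw [← mul_pow, hζ1]
      simp [hm0]
    · rw [Matrix.one_apply_ne hjl]
      set z := ζ ^ (j : ℕ) * star ζ ^ (l : ℕ) with hz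
      have hz1 : z ≠ 1 := by
        intro h
        apply hjl
        apply Fin.ext
        apply hζ.pow_inj j.2 l.2
        calc ζ ^ (j : ℕ) = ζ ^ (j : ℕ) * (ζ * star ζ) ^ (l : ℕ) := by rw [hζ1]; simp
          _ = z * ζ ^ (l : ℕ) := by rw [hz, mul_pow]; ring
          _ = ζ ^ (l : ℕ) := by rw [h, one_mul]
      have hzm : z ^ m = 1 := by
        rw [hz, mul_pow, ← pow_mul, ← pow_mul, mul_comm (j : ℕ), mul_comm (l : ℕ), pow_mul,
          pow_mul, ← star_pow, hζ.pow_eq_one]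
        simp
      rw [geom_sum_eq hz1, hzm]
      simp
  · intro j k
    have h : (ζ * star ζ) ^ ((j : ℕ) * k) = 1 := by rw [hζ1, one_pow]
    rw [Matrix.of_apply, star_mul', star_pow, star_pow, ← hc]
    calc c * (ζ ^ (j : ℕ)) ^ (k : ℕ) * (star c * (star ζ ^ (j : ℕ)) ^ (k : ℕ))
        = c * star c * (ζ * star ζ) ^ ((j : ℕ) * k) := by rw [mul_pow]; ring
      _ = c * star c := by rw [h, mul_one]

/-- If a `d × d` doubly stochastic matrix `D` is the uniform average of `m`
permutation matrices, then there is a unitary `U ∈ M_{m·d}(ℂ)` such that for all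
`β ∈ ℂᵈ`, `E_{m·d}(U (I_m ⊗ diag(β)) Uᴴ) = I_m ⊗ diag(Dβ)`. -/
theorem exists_unitary_dilation_of_uniform_average_of_permutations
    (d m : ℕ) (hm : 0 < m) (D : Matrix (Fin d) (Fin d) ℝ)
    (σ : Fin m → Equiv.Perm (Fin d))
    (hD : D = ((1 : ℝ) / m) • ∑ j, Equiv.Perm.permMatrix ℝ (σ j)) :
    ∃ U : Matrix (Fin m × Fin d) (Fin m × Fin d) ℂ, Uᴴ * U = 1 ∧
      ∀ β : Fin d → ℂ,
        diagCompress (U * ((1 : Matrix (Fin m) (Fin m) ℂ) ⊗ₖ Matrix.diagonal β) * Uᴴ)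
          = (1 : Matrix (Fin m) (Fin m) ℂ) ⊗ₖ
              Matrix.diagonal ((D.map fun x => (x : ℂ)) *ᵥ β) := by
  obtain ⟨F, hF, hFlat⟩ := exists_flat_unitary m hm
  refine ⟨Matrix.of fun p q => F p.1 q.1 * if σ q.1 p.2 = q.2 then 1 else 0, ?_, fun β => ?_⟩
  -- For `U * Uᴴ` both factors share the index `k`, hence the same `σ k`, so the Kronecker deltas
  -- force `a = b` and leave the row orthogonality of `F`.
  · rw [mul_eq_one_comm]
    ext ⟨j, a⟩ ⟨l, b⟩
    have hjl := congrFun (congrFun hF j) l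
    simp only [Matrix.mul_apply, Matrix.conjTranspose_apply] at hjl
    simp only [Matrix.mul_apply, Matrix.conjTranspose_apply, Matrix.of_apply,
      Fintype.sum_prod_type]
    by_cases hab : a = b
    · subst hab
      simpa [Matrix.one_apply] using hjl
    · have hba : b ≠ a := Ne.symm hab
      simp [hab, hba]
  · have hdiag : ∀ p : Fin m × Fin d,
        ((Matrix.of fun p q : Fin m × Fin d => F p.1 q.1 * if σ q.1 p.2 = q.2 then 1 else 0)
          * ((1 : Matrix (Fin m) (Fin m) ℂ) ⊗ₖ Matrix.diagonal β)
          * (Matrix.of fun p q : Fin m × Fin d =>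
              F p.1 q.1 * if σ q.1 p.2 = q.2 then 1 else 0)ᴴ) p p
          = ((D.map fun x => (x : ℂ)) *ᵥ β) p.2 := by
      rintro ⟨j, a⟩
      have hD' : ((D.map fun x => (x : ℂ)) *ᵥ β) a = ∑ k, 1 / m * β (σ k a) := by
        simp only [hD, Matrix.mulVec, dotProduct, Matrix.map_apply, Matrix.smul_apply,
          Matrix.sum_apply, Equiv.Perm.permMatrix, PEquiv.toMatrix_apply, Equiv.toPEquiv_apply,
          Option.mem_some_iff, smul_eq_mul]
        push_cast
        simp only [Finset.mul_sum, Finset.sum_mul]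
        rw [Finset.sum_comm]
        simp [apply_ite (Complex.ofReal)]
      rw [hD', ← Matrix.diagonal_one, Matrix.diagonal_kronecker_diagonal, Matrix.mul_apply]
      simp only [Matrix.mul_diagonal, Matrix.conjTranspose_apply, Matrix.of_apply,
        Fintype.sum_prod_type]
      refine Finset.sum_congr rfl fun k _ => ?_
      rw [Finset.sum_eq_single (σ k a) (fun b _ hb => by simp [hb.symm]) (by simp), ← hFlat j k]
      simp only [if_true, mul_one, one_mul]
      ring
    have hkron : (1 : Matrix (Fin m) (Fin m) ℂ) ⊗ₖ
        Matrix.diagonal ((D.map fun x => (x : ℂ)) *ᵥ β)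
          = Matrix.diagonal fun p : Fin m × Fin d => ((D.map fun x => (x : ℂ)) *ᵥ β) p.2 := by
      rw [← Matrix.diagonal_one, Matrix.diagonal_kronecker_diagonal]
      simp only [one_mul]
    rw [hkron, diagCompress]
    exact congrArg Matrix.diagonal (funext hdiag)
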